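/- Let n ∈ ℕ and let f : ℝⁿ → ℝ be continuous. If the embedded function f̃, given by f̃(φ, x) := ∫_{ℝⁿ} f(y) φ(y − x) dy for φ ∈ 𝒜₀(ℝⁿ), is negligible, then f = 0 identically; that is, the embedding of distributions into the Colombeau algebra is injective on continuous functions. -/

import Mathlib

open MeasureTheory Filter Topology

noncomputable section

namespace Colombeau

/-- `φ ∈ 𝒟(ℝⁿ)`: smooth compactly supported function. -/
def IsTestFunction (n : ℕ) (φ : (Fin n → ℝ) → ℝ) : Prop :=
  ContDiff ℝ (⊤ : ℕ∞) φ ∧ HasCompactSupport φ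

/-- `φ ∈ 𝒜₀(ℝⁿ)`: test function with integral one. -/
def IsA0 (n : ℕ) (φ : (Fin n → ℝ) → ℝ) : Prop :=
  IsTestFunction n φ ∧ ∫ x, φ x = 1

/-- `φ ∈ 𝒜_q(ℝⁿ)`: vanishing moments up to order `q`. -/
def IsAq (n q : ℕ) (φ : (Fin n → ℝ) → ℝ) : Prop :=
  IsA0 n φ ∧ ∀ i : Fin n → ℕ, 1 ≤ ∑ j, i j → ∑ j, i j ≤ q →
    ∫ x, (∏ j, x j ^ i j) * φ x = 0

/-- the scaled mollifier `φ_ε(x) = ε⁻ⁿ φ(x/ε)`. -/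
def scaled (n : ℕ) (φ : (Fin n → ℝ) → ℝ) (ε : ℝ) : (Fin n → ℝ) → ℝ :=
  fun x => (ε ^ n)⁻¹ * φ (ε⁻¹ • x)

/-- partial derivative `∂_i`. -/
def partialD {n : ℕ} (i : Fin n) (f : (Fin n → ℝ) → ℝ) : (Fin n → ℝ) → ℝ :=
  fun x => fderiv ℝ f x (Pi.single i 1)

/-- multi-index derivative `∂^k = ∂₁^{k₁} ⋯ ∂_n^{k_n}`. -/
def multiD {n : ℕ} (k : Fin n → ℕ) (f : (Fin n → ℝ) → ℝ) : (Fin n → ℝ) → ℝ :=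
  (List.finRange n).foldl (fun g i => (partialD i)^[k i] g) f

/-- Moderate functions of the basic space. -/
def Moderate (n : ℕ) (F : ((Fin n → ℝ) → ℝ) → (Fin n → ℝ) → ℝ) : Prop :=
  ∀ K : Set (Fin n → ℝ), IsCompact K → ∀ k : Fin n → ℕ,
    ∃ N : ℕ, ∀ φ, IsAq n N φ →
      ∃ C > 0, ∀ᶠ ε in 𝓝[>] (0:ℝ), ∀ x ∈ K,
        |multiD k (F (scaled n φ ε)) x| ≤ C * ε ^ (-(N:ℤ))

/-- Negligible functions of the basic space. -/
def Negligible (n : ℕ) (F : ((Fin n → ℝ) → ℝ) → (Fin n → ℝ) → ℝ) : Prop :=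
  ∀ K : Set (Fin n → ℝ), IsCompact K → ∀ k : Fin n → ℕ, ∀ m : ℕ,
    ∃ q : ℕ, ∀ φ, IsAq n q φ →
      ∃ C > 0, ∀ᶠ ε in 𝓝[>] (0:ℝ), ∀ x ∈ K,
        |multiD k (F (scaled n φ ε)) x| ≤ C * ε ^ m


/-- The substitution `x = ε z` absorbs the scaling of a mollifier. -/
theorem integral_mul_scaled (n : ℕ) (g φ : (Fin n → ℝ) → ℝ) {ε : ℝ} (hε : 0 < ε) :
    ∫ x, g x * scaled n φ ε x = ∫ z, g (ε • z) * φ z := by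
  have h := Measure.integral_comp_inv_smul (volume : Measure (Fin n → ℝ))
    (fun z => g (ε • z) * φ z) ε
  have hn : (0 : ℝ) < ε ^ n := pow_pos hε n
  simp only [smul_inv_smul₀ hε.ne', Module.finrank_fin_fun, abs_of_pos hn, smul_eq_mul] at h
  calc ∫ x, g x * scaled n φ ε x = ∫ x, (ε ^ n)⁻¹ * (g x * φ (ε⁻¹ • x)) := by
        congr 1 with x
        simp only [scaled]
        ring
    _ = ∫ z, g (ε • z) * φ z := by
        rw [integral_const_mul, h, inv_mul_cancel_left₀ hn.ne']

theorem IsTestFunction.scaled {n : ℕ} {φ : (Fin n → ℝ) → ℝ} (hφ : IsTestFunction n φ)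
    {ε : ℝ} (hε : 0 < ε) : IsTestFunction n (scaled n φ ε) :=
  ⟨contDiff_const.mul (hφ.1.comp (contDiff_const_smul _)),
    (hφ.2.comp_smul (inv_ne_zero hε.ne')).mul_left⟩

theorem integral_monomial_mul_scaled (n : ℕ) (φ : (Fin n → ℝ) → ℝ) {ε : ℝ} (hε : 0 < ε)
    (i : Fin n → ℕ) :
    ∫ x, (∏ j, x j ^ i j) * scaled n φ ε x =
      ε ^ (∑ j, i j) * ∫ x, (∏ j, x j ^ i j) * φ x := by
  rw [integral_mul_scaled n (fun x => ∏ j, x j ^ i j) φ hε, ← integral_const_mul]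
  congr 1 with x
  simp only [Pi.smul_apply, smul_eq_mul, mul_pow, Finset.prod_mul_distrib,
    Finset.prod_pow_eq_pow_sum, mul_assoc]

theorem IsTestFunction.integrable_monomial_mul {n : ℕ} {φ : (Fin n → ℝ) → ℝ}
    (hφ : IsTestFunction n φ) (i : Fin n → ℕ) :
    Integrable (fun x : Fin n → ℝ => (∏ j, x j ^ i j) * φ x) := by
  have := hφ.1.continuous
  exact Continuous.integrable_of_hasCompactSupport (by fun_prop) hφ.2.mul_left

theorem isA0_iff_moment {n : ℕ} {φ : (Fin n → ℝ) → ℝ} :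
    IsA0 n φ ↔ IsTestFunction n φ ∧ ∫ x, (∏ j, x j ^ (0 : Fin n → ℕ) j) * φ x = 1 := by
  simp [IsA0]

/-- The sets `𝒜_q(ℝⁿ)` are nonempty: an affine combination of `φ ∈ 𝒜_q` and its dilation by `2`
lies in `𝒜_{q+1}`. -/
theorem exists_isAq (n q : ℕ) : ∃ φ, IsAq n q φ := by
  induction q with
  | zero =>
    let b : ContDiffBump (0 : Fin n → ℝ) := ⟨1, 2, one_pos, one_lt_two⟩
    exact ⟨b.normed volume, ⟨⟨b.contDiff_normed, b.hasCompactSupport_normed⟩,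
      b.integral_normed⟩, fun i h₁ h₂ => by omega⟩
  | succ q ih =>
    obtain ⟨φ, hφ, hmom⟩ := ih
    have hs := hφ.1.scaled two_pos
    have hpow : (2 : ℝ) ^ (q + 1) - 1 ≠ 0 :=
      (sub_pos.2 (one_lt_pow₀ one_lt_two q.succ_ne_zero)).ne'
    let ψ : (Fin n → ℝ) → ℝ := fun x =>
      ((2 : ℝ) ^ (q + 1) - 1)⁻¹ * (2 ^ (q + 1) * φ x - scaled n φ 2 x)
    have hψ (i : Fin n → ℕ) : ∫ x, (∏ j, x j ^ i j) * ψ x =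
        ((2 : ℝ) ^ (q + 1) - 1)⁻¹ * (2 ^ (q + 1) - 2 ^ (∑ j, i j)) *
          ∫ x, (∏ j, x j ^ i j) * φ x := by
      calc ∫ x, (∏ j, x j ^ i j) * ψ x
          = ∫ x, ((2 : ℝ) ^ (q + 1) - 1)⁻¹ * (2 ^ (q + 1) * ((∏ j, x j ^ i j) * φ x) -
              (∏ j, x j ^ i j) * scaled n φ 2 x) := by
            congr 1 with x
            simp only [ψ]
            ring
        _ = _ := by
            rw [integral_const_mul, integral_sub ((hφ.1.integrable_monomial_mul i).const_mul _)
              (hs.integrable_monomial_mul i), integral_const_mul,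
              integral_monomial_mul_scaled n φ two_pos i]
            ring
    refine ⟨ψ, isA0_iff_moment.2 ⟨⟨contDiff_const.mul ((contDiff_const.mul hφ.1.1).sub hs.1),
      (hφ.1.2.mul_left.sub hs.2).mul_left⟩, ?_⟩, fun i h₁ h₂ => ?_⟩
    · rw [hψ, (isA0_iff_moment.1 hφ).2]
      simp [hpow]
    · rw [hψ]
      rcases h₂.lt_or_eq with h | h
      · rw [hmom i h₁ (by omega), mul_zero]
      · rw [h, sub_self, mul_zero, zero_mul]

theorem multiD_zero {n : ℕ} (f : (Fin n → ℝ) → ℝ) : multiD 0 f = f := by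
  have h (l : List (Fin n)) :
      l.foldl (fun g i => (partialD i)^[(0 : Fin n → ℕ) i] g) f = f := by
    induction l with
    | nil => rfl
    | cons a l ih => simp
  exact h _

/-- Mollifications of a continuous function converge pointwise to it. -/
theorem tendsto_integral_mul_scaled {n : ℕ} {f φ : (Fin n → ℝ) → ℝ} (hf : Continuous f)
    (hφ : IsA0 n φ) (x : Fin n → ℝ) :
    Tendsto (fun ε => ∫ y, f y * scaled n φ ε (y - x)) (𝓝[>] 0) (𝓝 (f x)) := by
  have hφc := hφ.1.1.continuous
  have hcont : Continuous fun ε : ℝ => ∫ z in tsupport φ, f (ε • z + x) * φ z :=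
    continuous_parametric_integral_of_continuous
      (f := fun (ε : ℝ) z => f (ε • z + x) * φ z)
      (by simp only [Function.uncurry_def]; fun_prop) hφ.1.2
  have hset (ε : ℝ) : ∫ z in tsupport φ, f (ε • z + x) * φ z = ∫ z, f (ε • z + x) * φ z :=
    setIntegral_eq_integral_of_forall_compl_eq_zero fun z hz => by
      rw [image_eq_zero_of_notMem_tsupport hz, mul_zero]
  simp only [hset] at hcont
  have hlim := hcont.tendsto 0
  simp only [zero_smul, zero_add, integral_const_mul, hφ.2, mul_one] at hlim
  refine (hlim.mono_left nhdsWithin_le_nhds).congr' ?_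
  filter_upwards [self_mem_nhdsWithin] with ε hε
  rw [← integral_mul_scaled n (fun y => f (y + x)) φ hε,
    ← integral_sub_right_eq_self (fun y => f (y + x) * scaled n φ ε y) x]
  simp only [sub_add_cancel]

/-- the embedding is injective on continuous functions: if the
embedding of a continuous function is negligible, the function vanishes. -/
theorem embedding_injective_on_continuous (n : ℕ) (f : (Fin n → ℝ) → ℝ)
    (hf : Continuous f)
    (hneg : Negligible n (fun φ x => ∫ y, f y * φ (y - x))) :
    ∀ x, f x = 0 := by
  intro x
  obtain ⟨q, hq⟩ := hneg {x} isCompact_singleton 0 1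
  obtain ⟨φ, hφ⟩ := exists_isAq n q
  obtain ⟨C, -, hC⟩ := hq φ hφ
  have hbound : Tendsto (fun ε : ℝ => C * ε ^ 1) (𝓝[>] 0) (𝓝 0) := by
    have h : Continuous fun ε : ℝ => C * ε ^ 1 := by fun_prop
    simpa using (h.tendsto 0).mono_left nhdsWithin_le_nhds
  refine tendsto_nhds_unique (tendsto_integral_mul_scaled hf hφ.1 x)
    (squeeze_zero_norm' ?_ hbound)
  filter_upwards [hC] with ε hε
  simpa only [multiD_zero, Real.norm_eq_abs] using hε x rfl

end Colombeau
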